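/- Let C be a binary linear code of length N with minimum distance d_min, used over the binary erasure channel, and let ε* ∈ (0,1) satisfy P_MAP(ε*) = 1/2. Then for all 0 < ε < ε*, P_MAP(ε) ≤ Φ(√(2·d_min)·(√(−ln ε*) − √(−ln ε))), and for all ε* < ε < 1, P_MAP(ε) ≥ Φ(√(2·d_min)·(√(−ln ε*) − √(−ln ε))). -/

import Mathlib

open scoped Classical
open Finset

noncomputable section

/-- Erasure/error patterns and codewords: vectors in 𝔽₂^N. -/
abbrev Pattern (N : ℕ) := Fin N → ZMod 2

/-- Hamming weight. -/
def wH {N : ℕ} (x : Pattern N) : ℕ := hammingNorm x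

/-- `ω` covers `x` if the support of `x` is contained in the support of `ω`. -/
def covers {N : ℕ} (ω x : Pattern N) : Prop := ∀ i, x i ≠ 0 → ω i ≠ 0

/-- Product Bernoulli(ε) measure of a set of patterns. -/
def muE {N : ℕ} (ε : ℝ) (S : Finset (Pattern N)) : ℝ :=
  ∑ ω ∈ S, ε ^ wH ω * (1 - ε) ^ (N - wH ω)

/-- Erasure patterns causing a block-MAP error over the BEC:
those covering at least one nonzero codeword. -/
def errBEC {N : ℕ} (C : Submodule (ZMod 2) (Pattern N)) : Finset (Pattern N) :=
  univ.filter (fun ω => ∃ x ∈ C, x ≠ 0 ∧ covers ω x)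

/-- Block-MAP error probability over BEC(ε). -/
def Pmap {N : ℕ} (C : Submodule (ZMod 2) (Pattern N)) (ε : ℝ) : ℝ :=
  muE ε (errBEC C)

/-- Standard normal CDF. -/
def Phi (x : ℝ) : ℝ := ∫ u in Set.Iic x, Real.exp (-u ^ 2 / 2) / Real.sqrt (2 * Real.pi)

open Filter Topology MeasureTheory

/-- Standard normal density. -/
def gphi (x : ℝ) : ℝ := Real.exp (-x ^ 2 / 2) / Real.sqrt (2 * Real.pi)

lemma gphi_pos (x : ℝ) : 0 < gphi x := by unfold gphi; positivity

lemma gphi_eq (x : ℝ) : gphi x = ProbabilityTheory.gaussianPDFReal 0 1 x := by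
  unfold gphi ProbabilityTheory.gaussianPDFReal
  simp; ring

lemma gphi_int : Integrable gphi := by
  have : gphi = ProbabilityTheory.gaussianPDFReal 0 1 := funext gphi_eq
  rw [this]; exact ProbabilityTheory.integrable_gaussianPDFReal 0 1

lemma gphi_total : ∫ x, gphi x = 1 := by
  have : gphi = ProbabilityTheory.gaussianPDFReal 0 1 := funext gphi_eq
  rw [this]; exact ProbabilityTheory.integral_gaussianPDFReal_eq_one 0 (by simp)

lemma gphi_hasDerivAt (x : ℝ) : HasDerivAt gphi (-x * gphi x) x := by
  unfold gphi
  have h1 : HasDerivAt (fun x : ℝ => -x ^ 2 / 2) (-x) x := by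
    have := ((hasDerivAt_pow 2 x).neg).div_const 2
    refine this.congr_deriv ?_
    simp; ring
  have := (h1.exp).div_const (Real.sqrt (2 * Real.pi))
  refine this.congr_deriv ?_
  ring

lemma gphi_cont : Continuous gphi :=
  continuous_iff_continuousAt.2 fun x => (gphi_hasDerivAt x).continuousAt

lemma Phi_eq (x : ℝ) : Phi x = ∫ u in Set.Iic x, gphi u := rfl

lemma Phi_hasDerivAt (x : ℝ) : HasDerivAt Phi (gphi x) x := by
  have h : Phi = fun x => Phi 0 + ∫ u in (0:ℝ)..x, gphi u := by
    funext y
    rw [Phi_eq, Phi_eq, ← intervalIntegral.integral_Iic_sub_Iic gphi_int.integrableOn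
      gphi_int.integrableOn]
    ring
  rw [h]
  exact (intervalIntegral.integral_hasDerivAt_right (gphi_cont.intervalIntegrable _ _)
    (gphi_cont.stronglyMeasurableAtFilter _ _) gphi_cont.continuousAt).const_add _

lemma Phi_cont : Continuous Phi :=
  continuous_iff_continuousAt.2 fun x => (Phi_hasDerivAt x).continuousAt

lemma Phi_strictMono : StrictMono Phi :=
  strictMono_of_deriv_pos fun x => by rw [(Phi_hasDerivAt x).deriv]; exact gphi_pos x

lemma Phi_eq_cdf (x : ℝ) : Phi x = ProbabilityTheory.cdf (ProbabilityTheory.gaussianReal 0 1) x := by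
  rw [ProbabilityTheory.cdf_eq_real, measureReal_def,
    ProbabilityTheory.gaussianReal_apply_eq_integral 0 (by simp), ENNReal.toReal_ofReal]
  · rw [Phi_eq]
    simp_rw [gphi_eq]
  · exact integral_nonneg fun x => ProbabilityTheory.gaussianPDFReal_nonneg 0 1 x

lemma Phi_atBot : Tendsto Phi atBot (𝓝 0) := by
  rw [show Phi = _ from funext Phi_eq_cdf]
  exact ProbabilityTheory.tendsto_cdf_atBot _

lemma Phi_atTop : Tendsto Phi atTop (𝓝 1) := by
  rw [show Phi = _ from funext Phi_eq_cdf]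
  exact ProbabilityTheory.tendsto_cdf_atTop _

lemma Phi_pos (x : ℝ) : 0 < Phi x := by
  have h1 : Phi (x-1) < Phi x := Phi_strictMono (by linarith)
  have h2 : 0 ≤ Phi (x-1) := Phi_strictMono.monotone.le_of_tendsto Phi_atBot _
  linarith

lemma Phi_lt_one (x : ℝ) : Phi x < 1 := by
  have h1 : Phi x < Phi (x+1) := Phi_strictMono (by linarith)
  have h2 : Phi (x+1) ≤ 1 := Phi_strictMono.monotone.ge_of_tendsto Phi_atTop _
  linarith

lemma Phi_zero : Phi 0 = 1 / 2 := by
  have h1 : ∫ u in Set.Iic (0:ℝ), gphi (-u) = ∫ u in Set.Ioi (-0:ℝ), gphi u :=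
    integral_comp_neg_Iic 0 gphi
  have h2 : ∀ u, gphi (-u) = gphi u := by intro u; simp [gphi]
  simp_rw [h2] at h1
  have h3 := intervalIntegral.integral_Iic_add_Ioi (b := (0:ℝ)) (f := gphi) (μ := volume)
    gphi_int.integrableOn gphi_int.integrableOn
  rw [gphi_total] at h3
  rw [neg_zero] at h1
  rw [Phi_eq]; linarith

lemma pow_gphi_tendsto (n : ℕ) : Tendsto (fun x => x ^ n * gphi x) atBot (𝓝 0) := by
  have h := tendsto_rpow_abs_mul_exp_neg_mul_sq_cocompact (a := 1/2) (by norm_num) (n : ℝ)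
  have h' := (h.mono_left atBot_le_cocompact).div_const (Real.sqrt (2 * Real.pi))
  rw [zero_div] at h'
  refine squeeze_zero_norm (fun x => ?_) h'
  rw [norm_mul, norm_pow, Real.norm_eq_abs, Real.norm_eq_abs, abs_of_pos (gphi_pos x),
    Real.rpow_natCast, gphi, mul_div_assoc]
  apply le_of_eq
  congr 3
  ring

lemma gphi_atBot : Tendsto gphi atBot (𝓝 0) := by
  simpa using pow_gphi_tendsto 0

lemma gphi_atTop : Tendsto gphi atTop (𝓝 0) := by
  have := gphi_atBot.comp tendsto_neg_atTop_atBot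
  refine this.congr fun x => by simp [gphi]

lemma ge_of_deriv {f f' : ℝ → ℝ} {a L : ℝ} (hf : ∀ x, HasDerivAt f (f' x) x)
    (hf' : ∀ x ≤ a, 0 ≤ f' x) (hL : Tendsto f atBot (𝓝 L)) : L ≤ f a := by
  have hm : MonotoneOn f (Set.Iic a) := by
    refine monotoneOn_of_deriv_nonneg (convex_Iic a)
      (fun x _ => (hf x).continuousAt.continuousWithinAt)
      (fun x _ => (hf x).differentiableAt.differentiableWithinAt) ?_
    intro x hx
    rw [interior_Iic] at hx
    rw [(hf x).deriv]; exact hf' x (le_of_lt hx)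
  refine le_of_tendsto hL ?_
  filter_upwards [eventually_le_atBot a] with x hx
  exact hm hx (Set.mem_Iic.2 le_rfl) hx

lemma Phi_le_gphi {y : ℝ} (hy : y ≤ -1) : Phi y ≤ gphi y := by
  have := ge_of_deriv (f := fun x => gphi x - Phi x) (a := y)
    (fun x => (gphi_hasDerivAt x).sub (Phi_hasDerivAt x))
    (fun x hx => by nlinarith [gphi_pos x]) (by simpa using gphi_atBot.sub Phi_atBot)
  linarith

lemma pow_Phi_tendsto (n : ℕ) : Tendsto (fun x => x ^ n * Phi x) atBot (𝓝 0) := by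
  have h := (pow_gphi_tendsto n).norm
  rw [norm_zero] at h
  refine squeeze_zero_norm' ?_ h
  filter_upwards [eventually_le_atBot (-1 : ℝ)] with x hx
  rw [norm_mul, norm_mul, Real.norm_eq_abs (Phi x), Real.norm_eq_abs (gphi x),
    abs_of_pos (gphi_pos x), abs_of_pos (Phi_pos x)]
  exact mul_le_mul_of_nonneg_left (Phi_le_gphi hx) (norm_nonneg _)

lemma mills1 (y : ℝ) : 0 ≤ gphi y + y * Phi y := by
  refine ge_of_deriv (f := fun x => gphi x + x * Phi x) (f' := Phi) (fun x => ?_)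
    (fun x _ => (Phi_pos x).le) ?_
  · have := (gphi_hasDerivAt x).add ((hasDerivAt_id x).mul (Phi_hasDerivAt x))
    refine this.congr_deriv ?_
    simp
  · simpa using gphi_atBot.add (pow_Phi_tendsto 1)

lemma mills2 (y : ℝ) : 0 ≤ Phi y * (1 + y ^ 2) + y * gphi y := by
  refine ge_of_deriv (f := fun x => Phi x * (1 + x ^ 2) + x * gphi x)
    (f' := fun y => 2 * (gphi y + y * Phi y)) (fun x => ?_)
    (fun x _ => mul_nonneg zero_le_two (mills1 x)) ?_
  · have := ((Phi_hasDerivAt x).mul ((hasDerivAt_pow 2 x).const_add 1)).add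
      ((hasDerivAt_id x).mul (gphi_hasDerivAt x))
    refine this.congr_deriv ?_
    simp; ring
  · have := (Phi_atBot.add (pow_Phi_tendsto 2)).add (pow_gphi_tendsto 1)
    simp only [add_zero] at this
    refine this.congr fun x => by ring

lemma mills3 (y : ℝ) : gphi y * (gphi y + y * Phi y) ≤ Phi y ^ 2 := by
  have : 0 ≤ Phi y ^ 2 - gphi y * (gphi y + y * Phi y) := by
    refine ge_of_deriv (f := fun y => Phi y ^ 2 - gphi y * (gphi y + y * Phi y))
      (f' := fun y => gphi y * (Phi y * (1 + y ^ 2) + y * gphi y)) (fun x => ?_)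
      (fun x _ => mul_nonneg (gphi_pos x).le (mills2 x)) ?_
    · have := ((Phi_hasDerivAt x).pow 2).sub ((gphi_hasDerivAt x).mul ((gphi_hasDerivAt x).add
        ((hasDerivAt_id x).mul (Phi_hasDerivAt x))))
      refine this.congr_deriv ?_
      simp; ring
    · have := (Phi_atBot.pow 2).sub (gphi_atBot.mul (gphi_atBot.add (pow_Phi_tendsto 1)))
      simpa using this
  linarith

lemma gap_nonneg {z y : ℝ} (h : z ≤ y) : 0 ≤ gphi y - gphi z + y * (Phi y - Phi z) := by
  have hd : ∀ x, HasDerivAt (fun z => gphi y - gphi z + y * (Phi y - Phi z))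
      ((x - y) * gphi x) x := fun x => by
    have := ((gphi_hasDerivAt x).const_sub (gphi y)).add
      (((Phi_hasDerivAt x).const_sub (Phi y)).const_mul y)
    refine this.congr_deriv ?_
    ring
  have hm : AntitoneOn (fun z => gphi y - gphi z + y * (Phi y - Phi z)) (Set.Iic y) := by
    refine antitoneOn_of_deriv_nonpos (convex_Iic y)
      (fun x _ => (hd x).continuousAt.continuousWithinAt)
      (fun x _ => (hd x).differentiableAt.differentiableWithinAt) ?_
    intro x hx
    rw [interior_Iic] at hx
    rw [(hd x).deriv]
    have := gphi_pos x
    have hx' : x < y := hx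
    nlinarith
  have := hm (Set.mem_Iic.2 h) (Set.mem_Iic.2 le_rfl) h
  simpa using this

lemma gphi_mono_nonpos {x y : ℝ} (h : |y| ≤ |x|) : gphi x ≤ gphi y := by
  unfold gphi
  have := sq_le_sq.2 h
  gcongr

lemma gap_le {z y : ℝ} (h : z ≤ y) :
    gphi y * (gphi y - gphi z + y * (Phi y - Phi z)) ≤ (Phi y - Phi z) ^ 2 := by
  set χ : ℝ → ℝ := fun z => gphi y * (y - z) - 2 * (Phi y - Phi z) with hχ
  set ψ : ℝ → ℝ := fun z => (Phi y - Phi z) ^ 2 -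
    gphi y * (gphi y - gphi z + y * (Phi y - Phi z)) with hψ
  have hχd : ∀ x, HasDerivAt χ (2 * gphi x - gphi y) x := fun x => by
    have := (((hasDerivAt_id x).const_sub y).const_mul (gphi y)).sub
      (((Phi_hasDerivAt x).const_sub (Phi y)).const_mul 2)
    refine this.congr_deriv ?_
    simp; ring
  have hψd : ∀ x, HasDerivAt ψ (gphi x * χ x) x := fun x => by
    have := (((Phi_hasDerivAt x).const_sub (Phi y)).pow 2).sub
      ((((gphi_hasDerivAt x).const_sub (gphi y)).add
      (((Phi_hasDerivAt x).const_sub (Phi y)).const_mul y)).const_mul (gphi y))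
    refine this.congr_deriv ?_
    simp [hχ]; ring
  have hψy : ψ y = 0 := by simp [hψ]
  have hχy : χ y = 0 := by simp [hχ]
  -- if the derivative is nonneg at w then chi is nonpos at w
  have hA : ∀ w ≤ y, 0 ≤ 2 * gphi w - gphi y → χ w ≤ 0 := by
    intro w hw hw'
    have hm : MonotoneOn χ (Set.Icc w y) := by
      refine monotoneOn_of_deriv_nonneg (convex_Icc w y)
        (fun x _ => (hχd x).continuousAt.continuousWithinAt)
        (fun x _ => (hχd x).differentiableAt.differentiableWithinAt) ?_
      intro x hx
      rw [interior_Icc] at hx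
      rw [(hχd x).deriv]
      have := gphi_pos y
      rcases le_total |x| |y| with h1 | h1
      · linarith [gphi_mono_nonpos h1]
      · have : |x| ≤ |w| := by
          rcases le_total 0 x with h2 | h2
          · rw [abs_of_nonneg h2, abs_of_nonneg (h2.trans hx.2.le)] at h1
            linarith [hx.2]
          · rw [abs_of_nonpos h2, abs_of_nonpos (hx.1.le.trans h2)]
            linarith [hx.1]
        linarith [gphi_mono_nonpos this]
    have := hm (Set.left_mem_Icc.2 hw) (Set.right_mem_Icc.2 hw) hw
    linarith
  -- if chi is positive at w then it stays so to the left
  have hB : ∀ w ≤ y, 0 < χ w → ∀ v ≤ w, 0 < χ v := by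
    intro w hw hw' v hv
    have hneg : 2 * gphi w - gphi y < 0 := by
      by_contra hcon
      exact absurd (hA w hw (not_lt.1 hcon)) (not_le.2 hw')
    have hwneg : w < 0 := by
      by_contra hcon
      push Not at hcon
      have : gphi y ≤ gphi w := gphi_mono_nonpos (by
        rw [abs_of_nonneg hcon, abs_of_nonneg (hcon.trans hw)]; exact hw)
      linarith [gphi_pos w]
    have hm : AntitoneOn χ (Set.Iic w) := by
      refine antitoneOn_of_deriv_nonpos (convex_Iic w)
        (fun x _ => (hχd x).continuousAt.continuousWithinAt)
        (fun x _ => (hχd x).differentiableAt.differentiableWithinAt) ?_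
      intro x hx
      rw [interior_Iic] at hx
      have hx' : x < w := hx
      rw [(hχd x).deriv]
      have : gphi x ≤ gphi w := gphi_mono_nonpos (by
        rw [abs_of_neg hwneg, abs_of_neg (hx'.trans hwneg)]; linarith)
      linarith
    exact hw'.trans_le (hm (Set.mem_Iic.2 hv) (Set.mem_Iic.2 le_rfl) hv)
  have hfin : 0 ≤ ψ z := by
    rcases le_or_gt (χ z) 0 with h0 | h0
    · have hm : AntitoneOn ψ (Set.Icc z y) := by
        refine antitoneOn_of_deriv_nonpos (convex_Icc z y)
          (fun x _ => (hψd x).continuousAt.continuousWithinAt)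
          (fun x _ => (hψd x).differentiableAt.differentiableWithinAt) ?_
        intro x hx
        rw [interior_Icc] at hx
        rw [(hψd x).deriv]
        have : χ x ≤ 0 := by
          by_contra hcon
          push Not at hcon
          linarith [hB x hx.2.le hcon z hx.1.le]
        exact mul_nonpos_of_nonneg_of_nonpos (gphi_pos x).le this
      have := hm (Set.left_mem_Icc.2 h) (Set.right_mem_Icc.2 h) h
      linarith
    · have hL : Tendsto ψ atBot (𝓝 ((Phi y - 0) ^ 2 -
          gphi y * (gphi y - 0 + y * (Phi y - 0)))) :=
        ((Phi_atBot.const_sub _).pow 2).sub (((gphi_atBot.const_sub _).add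
          ((Phi_atBot.const_sub _).const_mul y)).const_mul _)
      have := ge_of_deriv hψd (fun x hx => mul_nonneg (gphi_pos x).le (hB z h h0 x hx).le) hL
      have h3 := mills3 y
      simp only [sub_zero] at this
      linarith
  simp only [hψ] at hfin
  linarith


lemma Phi_surj {t : ℝ} (h0 : 0 < t) (h1 : t < 1) : ∃ x, Phi x = t := by
  obtain ⟨a, ha⟩ := (Phi_atBot.eventually_lt_const h0).exists
  obtain ⟨b, hb⟩ := (Phi_atTop.eventually_const_lt h1).exists
  exact mem_range_of_exists_le_of_exists_ge Phi_cont ⟨a, ha.le⟩ ⟨b, hb.le⟩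

/-- The normal quantile function. -/
def gQ (t : ℝ) : ℝ := if h : ∃ x, Phi x = t then h.choose else 0

lemma Phi_gQ {t : ℝ} (h0 : 0 < t) (h1 : t < 1) : Phi (gQ t) = t := by
  have h := Phi_surj h0 h1
  rw [gQ, dif_pos h]
  exact h.choose_spec

lemma gQ_Phi (x : ℝ) : gQ (Phi x) = x :=
  Phi_strictMono.injective (Phi_gQ (Phi_pos x) (Phi_lt_one x))

lemma gQ_lt_iff {t x : ℝ} (h0 : 0 < t) (h1 : t < 1) : gQ t < x ↔ t < Phi x := by
  rw [← Phi_strictMono.lt_iff_lt, Phi_gQ h0 h1]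

lemma lt_gQ_iff {t x : ℝ} (h0 : 0 < t) (h1 : t < 1) : x < gQ t ↔ Phi x < t := by
  rw [← Phi_strictMono.lt_iff_lt, Phi_gQ h0 h1]

lemma Ioo_ev {t : ℝ} (h0 : 0 < t) (h1 : t < 1) : ∀ᶠ s in 𝓝 t, 0 < s ∧ s < 1 :=
  Ioo_mem_nhds h0 h1

lemma gQ_contAt {t : ℝ} (h0 : 0 < t) (h1 : t < 1) : ContinuousAt gQ t := by
  refine tendsto_order.2 ⟨fun a ha => ?_, fun a ha => ?_⟩
  · filter_upwards [Ioo_ev h0 h1, lt_mem_nhds ((lt_gQ_iff h0 h1).1 ha)] with s hs h2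
    exact (lt_gQ_iff hs.1 hs.2).2 h2
  · filter_upwards [Ioo_ev h0 h1, gt_mem_nhds ((gQ_lt_iff h0 h1).1 ha)] with s hs h2
    exact (gQ_lt_iff hs.1 hs.2).2 h2

lemma gQ_hasDerivAt {t : ℝ} (h0 : 0 < t) (h1 : t < 1) :
    HasDerivAt gQ (gphi (gQ t))⁻¹ t := by
  refine HasDerivAt.of_local_left_inverse (gQ_contAt h0 h1) (Phi_hasDerivAt _)
    (gphi_pos _).ne' ?_
  filter_upwards [Ioo_ev h0 h1] with s hs
  exact Phi_gQ hs.1 hs.2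

/-- The Gaussian isoperimetric function. -/
def gI (t : ℝ) : ℝ := if 0 < t ∧ t < 1 then gphi (gQ t) else 0

lemma gI_of {t : ℝ} (h0 : 0 < t) (h1 : t < 1) : gI t = gphi (gQ t) := if_pos ⟨h0, h1⟩

lemma gI_nonneg (t : ℝ) : 0 ≤ gI t := by
  unfold gI; split_ifs
  · exact (gphi_pos _).le
  · exact le_rfl

lemma gI_zero : gI 0 = 0 := by simp [gI]
lemma gI_one : gI 1 = 0 := by simp [gI]

lemma gI_hasDerivAt {t : ℝ} (h0 : 0 < t) (h1 : t < 1) : HasDerivAt gI (-gQ t) t := by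
  have h := (gphi_hasDerivAt (gQ t)).comp t (gQ_hasDerivAt h0 h1)
  have h2 : -gQ t * gphi (gQ t) * (gphi (gQ t))⁻¹ = -gQ t := by
    rw [mul_assoc, mul_inv_cancel₀ (gphi_pos _).ne', mul_one]
  rw [h2] at h
  refine h.congr_of_eventuallyEq ?_
  filter_upwards [Ioo_ev h0 h1] with s hs
  exact gI_of hs.1 hs.2

lemma gI_cont_zero : ContinuousAt gI 0 := by
  rw [ContinuousAt, gI_zero]
  refine tendsto_order.2 ⟨fun a ha => Eventually.of_forall fun s => ha.trans_le (gI_nonneg s),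
    fun a ha => ?_⟩
  obtain ⟨x, hx⟩ := eventually_atBot.1 (gphi_atBot.eventually_lt_const ha)
  filter_upwards [gt_mem_nhds (Phi_pos x)] with s hs
  by_cases h : 0 < s ∧ s < 1
  · rw [gI_of h.1 h.2]
    exact hx _ ((gQ_lt_iff h.1 h.2).2 hs).le
  · rw [gI, if_neg h]; exact ha

lemma gI_cont_one : ContinuousAt gI 1 := by
  rw [ContinuousAt, gI_one]
  refine tendsto_order.2 ⟨fun a ha => Eventually.of_forall fun s => ha.trans_le (gI_nonneg s),
    fun a ha => ?_⟩
  obtain ⟨x, hx⟩ := eventually_atTop.1 (gphi_atTop.eventually_lt_const ha)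
  filter_upwards [lt_mem_nhds (Phi_lt_one x)] with s hs
  by_cases h : 0 < s ∧ s < 1
  · rw [gI_of h.1 h.2]
    exact hx _ ((lt_gQ_iff h.1 h.2).2 hs).le
  · rw [gI, if_neg h]; exact ha

lemma gI_cont {t : ℝ} (h0 : 0 ≤ t) (h1 : t ≤ 1) : ContinuousAt gI t := by
  rcases h0.eq_or_lt with rfl | h0
  · exact gI_cont_zero
  rcases h1.eq_or_lt with rfl | h1
  · exact gI_cont_one
  exact (gI_hasDerivAt h0 h1).continuousAt

lemma gI_gap {b t : ℝ} (hb : 0 ≤ b) (hbt : b ≤ t) (h0 : 0 < t) (h1 : t < 1) :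
    0 ≤ gI t - gI b + gQ t * (t - b) ∧
    gI t * (gI t - gI b + gQ t * (t - b)) ≤ (t - b) ^ 2 := by
  rcases hb.eq_or_lt with rfl | hb
  · rw [gI_zero, gI_of h0 h1]
    have h1' := mills1 (gQ t)
    have h2' := mills3 (gQ t)
    rw [Phi_gQ h0 h1] at h1' h2'
    simpa using ⟨h1', h2'⟩
  · have hb1 := hbt.trans_lt h1
    have hle : gQ b ≤ gQ t := by
      rw [← Phi_strictMono.le_iff_le, Phi_gQ h0 h1, Phi_gQ hb hb1]; exact hbt
    have h1' := gap_nonneg hle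
    have h2' := gap_le hle
    rw [Phi_gQ h0 h1, Phi_gQ hb hb1] at h1' h2'
    rw [gI_of h0 h1, gI_of hb hb1]
    exact ⟨h1', h2'⟩

lemma two_point {p a b : ℝ} (hp0 : 0 < p) (hp1 : p < 1) (hb : 0 ≤ b) (hab : b ≤ a) (ha : a ≤ 1) :
    gI (p * a + (1 - p) * b) ≤
      p * Real.sqrt (gI a ^ 2 + (-2 * Real.log p) * (a - b) ^ 2) + (1 - p) * gI b := by
  rcases hab.eq_or_lt with rfl | hab
  · rw [sub_self, Real.sqrt_eq_rpow]
    simp only [ne_eq, OfNat.ofNat_ne_zero, not_false_eq_true, zero_pow, mul_zero, add_zero]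
    rw [← Real.sqrt_eq_rpow, Real.sqrt_sq (gI_nonneg _)]
    rw [show p * b + (1 - p) * b = b by ring]
    linarith
  set δ := a - b with hδ
  have hδ0 : 0 < δ := by linarith
  set G : ℝ → ℝ := fun s => (gI (b + s * δ) - (1 - s) * gI b) / s with hG
  set M : ℝ → ℝ := fun s => G s ^ 2 + 2 * δ ^ 2 * Real.log s with hM
  have hmem : ∀ s, 0 < s → s < 1 → 0 < b + s * δ ∧ b + s * δ < 1 := by
    intro s h0 h1
    constructor
    · positivity
    · nlinarith
  have hGd : ∀ s, 0 < s → s < 1 → HasDerivAt G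
      (-(gI (b + s * δ) - gI b + gQ (b + s * δ) * (s * δ)) / s ^ 2) s := by
    intro s h0 h1
    have hin : HasDerivAt (fun s => b + s * δ) δ s := by
      simpa using ((hasDerivAt_id s).mul_const δ).const_add b
    have hc := (gI_hasDerivAt (hmem s h0 h1).1 (hmem s h0 h1).2).comp s hin
    have := (hc.sub (((hasDerivAt_id s).const_sub 1).mul_const (gI b))).div (hasDerivAt_id s)
      h0.ne'
    refine this.congr_deriv ?_
    simp; ring
  have hMd : ∀ s, 0 < s → s < 1 → HasDerivAt M
      (2 * G s * (-(gI (b + s * δ) - gI b + gQ (b + s * δ) * (s * δ)) / s ^ 2)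
        + 2 * δ ^ 2 * s⁻¹) s := by
    intro s h0 h1
    have := ((hGd s h0 h1).pow 2).add ((Real.hasDerivAt_log h0.ne').const_mul (2 * δ ^ 2))
    refine this.congr_deriv ?_
    simp
  have hmono : MonotoneOn M (Set.Icc p 1) := by
    refine monotoneOn_of_deriv_nonneg (convex_Icc p 1) ?_ ?_ ?_
    · intro s hs
      have hs0 : 0 < s := hp0.trans_le hs.1
      have h1 : ContinuousAt gI (b + s * δ) := gI_cont (by positivity) (by nlinarith [hs.2])
      have h2 : ContinuousAt (fun s => b + s * δ) s := by fun_prop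
      have h3 : ContinuousAt (fun s => gI (b + s * δ)) s :=
        ContinuousAt.comp (f := fun s => b + s * δ) h1 h2
      have h4 : ContinuousAt G s :=
        (h3.sub (by fun_prop)).div continuousAt_id hs0.ne'
      exact ((h4.pow 2).add ((Real.continuousAt_log hs0.ne').const_mul _)).continuousWithinAt
    · intro s hs
      rw [interior_Icc] at hs
      exact (hMd s (hp0.trans hs.1) hs.2).differentiableAt.differentiableWithinAt
    · intro s hs
      rw [interior_Icc] at hs
      have hs0 := hp0.trans hs.1
      rw [(hMd s hs0 hs.2).deriv]
      obtain ⟨ht0, ht1⟩ := hmem s hs0 hs.2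
      have hgap := gI_gap hb (by nlinarith : b ≤ b + s * δ) ht0 ht1
      rw [show b + s * δ - b = s * δ by ring] at hgap
      obtain ⟨g1, g2⟩ := hgap
      set D := gI (b + s * δ) - gI b + gQ (b + s * δ) * (s * δ) with hD
      set J := gI (b + s * δ) with hJ
      have hb' := gI_nonneg b
      -- G * D ≤ s δ²
      have key : (J - (1 - s) * gI b) * D ≤ (s * δ) ^ 2 := by
        nlinarith [mul_nonneg (mul_nonneg (sub_nonneg.2 hs.2.le) hb') g1]
      have : 2 * G s * (-D / s ^ 2) + 2 * δ ^ 2 * s⁻¹ =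
          2 / s ^ 3 * ((s * δ) ^ 2 - (J - (1 - s) * gI b) * D) := by
        simp only [hG]
        field_simp
        ring
      rw [this]
      exact mul_nonneg (by positivity) (sub_nonneg.2 key)
  have hfin := hmono (Set.left_mem_Icc.2 hp1.le) (Set.right_mem_Icc.2 hp1.le) hp1.le
  simp only [hM, hG] at hfin
  rw [Real.log_one, one_mul, show b + δ = a by rw [hδ]; ring] at hfin
  have hsq : (gI (b + p * δ) - (1 - p) * gI b) / p ≤
      Real.sqrt (gI a ^ 2 + (-2 * Real.log p) * δ ^ 2) := by
    apply Real.le_sqrt_of_sq_le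
    norm_num at hfin
    linarith
  rw [div_le_iff₀ hp0] at hsq
  rw [show p * a + (1 - p) * b = b + p * δ by rw [hδ]; ring]
  linarith


/-- Weight of a pattern. -/
def wt {n : ℕ} (p : ℝ) (x : Pattern n) : ℝ := p ^ wH x * (1 - p) ^ (n - wH x)

/-- Expectation under the product Bernoulli measure. -/
def Ex {n : ℕ} (p : ℝ) (f : Pattern n → ℝ) : ℝ := ∑ x, wt p x * f x

/-- Indicator. -/
def ind {n : ℕ} (A : Pattern n → Prop) (x : Pattern n) : ℝ := if A x then 1 else 0

/-- Number of pivotal coordinates. -/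
def hb {n : ℕ} (A : Pattern n → Prop) (x : Pattern n) : ℕ :=
  if A x then (univ.filter fun i => ¬ A (Function.update x i 0)).card else 0

/-- Monotone events. -/
def Mono {n : ℕ} (A : Pattern n → Prop) : Prop := ∀ x i, A (Function.update x i 0) → A x

/-- Sections. -/
def sct {n : ℕ} (c : ZMod 2) (A : Pattern (n + 1) → Prop) (x : Pattern n) : Prop :=
  A (Fin.cons c x : Pattern (n + 1))

lemma wH_cons {n : ℕ} (c : ZMod 2) (x : Pattern n) :
    wH (Fin.cons c x : Pattern (n + 1)) = (if c ≠ 0 then 1 else 0) + wH x := by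
  simp only [wH, hammingNorm, Finset.card_filter, Fin.sum_univ_succ, Fin.cons_zero, Fin.cons_succ]

lemma wH_le {n : ℕ} (x : Pattern n) : wH x ≤ n := by
  have := hammingNorm_le_card_fintype (x := x)
  rw [Fintype.card_fin] at this
  exact this

lemma wt_one {n : ℕ} (p : ℝ) (x : Pattern n) :
    wt p (Fin.cons 1 x : Pattern (n + 1)) = p * wt p x := by
  unfold wt
  rw [wH_cons, if_pos (by decide), add_comm 1, Nat.add_sub_add_right, pow_succ]
  ring

lemma wt_zero {n : ℕ} (p : ℝ) (x : Pattern n) :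
    wt p (Fin.cons 0 x : Pattern (n + 1)) = (1 - p) * wt p x := by
  unfold wt
  rw [wH_cons, if_neg (by simp), zero_add, Nat.sub_add_comm (wH_le x), pow_succ]
  ring

lemma wt_pos {n : ℕ} {p : ℝ} (h0 : 0 < p) (h1 : p < 1) (x : Pattern n) : 0 < wt p x := by
  have : 0 < 1 - p := by linarith
  unfold wt; positivity

lemma Ex_succ {n : ℕ} (p : ℝ) (f : Pattern (n + 1) → ℝ) :
    Ex p f = p * Ex p (fun x : Pattern n => f (Fin.cons 1 x : Pattern (n + 1))) +
      (1 - p) * Ex p (fun x : Pattern n => f (Fin.cons 0 x : Pattern (n + 1))) := by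
  unfold Ex
  rw [← (Fin.consEquiv (fun _ : Fin (n + 1) => ZMod 2)).sum_comp, Fintype.sum_prod_type]
  have h2 : ∀ g : ZMod 2 → ℝ, ∑ c, g c = g 1 + g 0 := by
    intro g
    have := Fin.sum_univ_two (fun i : Fin 2 => g i)
    rw [add_comm]; exact this
  rw [h2, mul_sum, mul_sum]
  congr 1
  · refine sum_congr rfl fun x _ => ?_
    rw [← mul_assoc, ← wt_one]; rfl
  · refine sum_congr rfl fun x _ => ?_
    rw [← mul_assoc, ← wt_zero]; rfl

lemma ind_succ {n : ℕ} (c : ZMod 2) (A : Pattern (n + 1) → Prop) :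
    (fun x : Pattern n => ind A (Fin.cons c x : Pattern (n + 1))) = ind (sct c A) := rfl

lemma mono_sct {n : ℕ} {A : Pattern (n + 1) → Prop} (hA : Mono A) (c : ZMod 2) :
    Mono (sct c A) := by
  intro x i h
  refine hA _ i.succ ?_
  rw [← Fin.cons_update]
  exact h

lemma mono_le {n : ℕ} {A : Pattern (n + 1) → Prop} (hA : Mono A) (x : Pattern n)
    (h : sct 0 A x) : sct 1 A x := by
  refine hA _ 0 ?_
  rw [Fin.update_cons_zero]
  exact h

lemma hb_zero {n : ℕ} (A : Pattern (n + 1) → Prop) (x : Pattern n) :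
    hb A (Fin.cons 0 x : Pattern (n + 1)) = hb (sct 0 A) x := by
  unfold hb
  by_cases h : A (Fin.cons 0 x : Pattern (n + 1))
  · have h' : sct 0 A x := h
    rw [if_pos h, if_pos h', card_filter, card_filter, Fin.sum_univ_succ, Fin.update_cons_zero,
      if_neg (by simpa using h), zero_add]
    refine sum_congr rfl fun i _ => ?_
    rw [← Fin.cons_update]; rfl
  · have h' : ¬ sct 0 A x := h
    rw [if_neg h, if_neg h']

lemma hb_one {n : ℕ} {A : Pattern (n + 1) → Prop} (hA : Mono A) (x : Pattern n) :
    (hb A (Fin.cons 1 x : Pattern (n + 1)) : ℝ) =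
      hb (sct 1 A) x + (ind (sct 1 A) x - ind (sct 0 A) x) := by
  unfold hb ind
  by_cases h : A (Fin.cons 1 x : Pattern (n + 1))
  · have h' : sct 1 A x := h
    rw [if_pos h, if_pos h', if_pos h', card_filter, card_filter, Fin.sum_univ_succ,
      Fin.update_cons_zero]
    have : ∀ i, (if ¬ A (Function.update (Fin.cons 1 x : Pattern (n + 1)) (Fin.succ i) 0)
        then 1 else 0) = if ¬ sct 1 A (Function.update x i 0) then 1 else 0 := by
      intro i
      rw [← Fin.cons_update]; rfl
    simp only [this]
    by_cases h0 : sct 0 A x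
    · have h0' : A (Fin.cons 0 x : Pattern (n + 1)) := h0
      simp [h0, h0']
    · have h0' : ¬ A (Fin.cons 0 x : Pattern (n + 1)) := h0
      simp [h0, h0']; ring
  · have h' : ¬ sct 1 A x := h
    have h0 : ¬ sct 0 A x := fun h0 => h' (mono_le hA x h0)
    rw [if_neg h, if_neg h', if_neg h', if_neg h0]; simp

lemma ind_sub_nonneg {n : ℕ} {A : Pattern (n + 1) → Prop} (hA : Mono A) (x : Pattern n) :
    ind (sct 1 A) x - ind (sct 0 A) x = 0 ∨ ind (sct 1 A) x - ind (sct 0 A) x = 1 := by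
  unfold ind
  by_cases h0 : sct 0 A x
  · simp [h0, mono_le hA x h0]
  · by_cases h1 : sct 1 A x <;> simp [h0, h1]

lemma Ex_nil (p : ℝ) (f : Pattern 0 → ℝ) : Ex p f = f 0 := by
  have h : ∀ x : Pattern 0, wt p x = 1 := fun x => by
    have : wH x = 0 := Nat.le_zero.1 (wH_le x)
    simp [wt, this]
  unfold Ex
  rw [Fintype.sum_unique, h, one_mul]
  exact congrArg f (Subsingleton.elim _ _)

lemma Ex_sub {n : ℕ} (p : ℝ) (f g : Pattern n → ℝ) :
    Ex p (fun x => f x - g x) = Ex p f - Ex p g := by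
  unfold Ex
  rw [← sum_sub_distrib]
  exact sum_congr rfl fun x _ => by ring

lemma Ex_add {n : ℕ} (p : ℝ) (f g : Pattern n → ℝ) :
    Ex p (fun x => f x + g x) = Ex p f + Ex p g := by
  unfold Ex
  rw [← sum_add_distrib]
  exact sum_congr rfl fun x _ => by ring

lemma Ex_mul {n : ℕ} (p c : ℝ) (f : Pattern n → ℝ) :
    Ex p (fun x => c * f x) = c * Ex p f := by
  unfold Ex
  rw [mul_sum]
  exact sum_congr rfl fun x _ => by ring

lemma Ex_mono {n : ℕ} {p : ℝ} (h0 : 0 < p) (h1 : p < 1) {f g : Pattern n → ℝ}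
    (h : ∀ x, f x ≤ g x) : Ex p f ≤ Ex p g :=
  sum_le_sum fun x _ => mul_le_mul_of_nonneg_left (h x) (wt_pos h0 h1 x).le

lemma Ex_one {n : ℕ} (p : ℝ) : Ex p (fun _ : Pattern n => 1) = 1 := by
  induction n with
  | zero => rw [Ex_nil]
  | succ n ih => rw [Ex_succ, ih]; ring

lemma Ex_ind_nonneg {n : ℕ} {p : ℝ} (h0 : 0 < p) (h1 : p < 1) (A : Pattern n → Prop) :
    0 ≤ Ex p (ind A) :=
  sum_nonneg fun x _ => mul_nonneg (wt_pos h0 h1 x).le (by unfold ind; split_ifs <;> norm_num)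

lemma Ex_ind_le {n : ℕ} {p : ℝ} (h0 : 0 < p) (h1 : p < 1) (A : Pattern n → Prop) :
    Ex p (ind A) ≤ 1 := by
  rw [← Ex_one (n := n) p]
  exact Ex_mono h0 h1 fun x => by unfold ind; split_ifs <;> norm_num

lemma Ex_mink {n : ℕ} {p : ℝ} (h0 : 0 < p) (h1 : p < 1) (u v : Pattern n → ℝ) :
    Real.sqrt (Ex p u ^ 2 + Ex p v ^ 2) ≤ Ex p (fun x => Real.sqrt (u x ^ 2 + v x ^ 2)) := by
  have h := norm_sum_le (univ : Finset (Pattern n))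
    (fun x => ((wt p x * u x : ℝ) : ℂ) + ((wt p x * v x : ℝ) : ℂ) * Complex.I)
  rw [sum_add_distrib, ← sum_mul, ← Complex.ofReal_sum, ← Complex.ofReal_sum,
    Complex.norm_add_mul_I] at h
  refine h.trans (sum_le_sum fun x _ => ?_)
  rw [Complex.norm_add_mul_I]
  have hw := (wt_pos h0 h1 x).le
  rw [show (wt p x * u x) ^ 2 + (wt p x * v x) ^ 2 = wt p x ^ 2 * (u x ^ 2 + v x ^ 2) by ring,
    Real.sqrt_mul (sq_nonneg _), Real.sqrt_sq hw]

theorem isoperim {n : ℕ} {p : ℝ} (h0 : 0 < p) (h1 : p < 1) (A : Pattern n → Prop) (hA : Mono A) :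
    gI (Ex p (ind A)) ≤ Ex p (fun x => Real.sqrt ((-2 * Real.log p) * hb A x)) := by
  have hc : 0 ≤ -2 * Real.log p := by linarith [Real.log_neg h0 h1]
  induction n with
  | zero =>
    have hz : gI (Ex p (ind A)) = 0 := by
      by_cases h : A 0
      · have : Ex p (ind A) = 1 := by
          rw [Ex_nil, ind]; simp only [h, if_true, if_false]
        rw [this, gI_one]
      · have : Ex p (ind A) = 0 := by
          rw [Ex_nil, ind]; simp only [h, if_true, if_false]
        rw [this, gI_zero]
    rw [hz]
    exact sum_nonneg fun x _ => mul_nonneg (wt_pos h0 h1 x).le (Real.sqrt_nonneg _)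
  | succ n ih =>
    set c := -2 * Real.log p with hcdef
    have i1 := ih (sct 1 A) (mono_sct hA 1)
    have i0 := ih (sct 0 A) (mono_sct hA 0)
    rw [Ex_succ p (ind A), ind_succ, ind_succ, Ex_succ]
    set a := Ex p (ind (sct 1 A)) with ha
    set b := Ex p (ind (sct 0 A)) with hbd
    have hab : b ≤ a := Ex_mono h0 h1 fun x => by
      rcases ind_sub_nonneg hA x with h | h <;> linarith
    have t := two_point h0 h1 (Ex_ind_nonneg h0 h1 (sct 0 A)) hab (Ex_ind_le h0 h1 (sct 1 A))
    refine t.trans ?_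
    have hq : 0 ≤ 1 - p := by linarith
    refine add_le_add (mul_le_mul_of_nonneg_left ?_ h0.le) (mul_le_mul_of_nonneg_left ?_ hq)
    · have hm := Ex_mink h0 h1 (fun x => Real.sqrt (c * hb (sct 1 A) x))
        (fun x => Real.sqrt c * (ind (sct 1 A) x - ind (sct 0 A) x))
      have e1 : (fun x => Real.sqrt (Real.sqrt (c * hb (sct 1 A) x) ^ 2 +
          (Real.sqrt c * (ind (sct 1 A) x - ind (sct 0 A) x)) ^ 2)) =
          fun x : Pattern n => Real.sqrt (c * hb A (Fin.cons 1 x : Pattern (n + 1))) := by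
        funext x
        rw [Real.sq_sqrt (mul_nonneg hc (Nat.cast_nonneg _)), mul_pow, Real.sq_sqrt hc,
          hb_one hA]
        congr 1
        rcases ind_sub_nonneg hA x with h | h <;> rw [h] <;> ring
      rw [e1, Ex_mul, Ex_sub, ← ha, ← hbd] at hm
      refine le_trans (Real.sqrt_le_sqrt ?_) hm
      rw [mul_pow, Real.sq_sqrt hc]
      have := gI_nonneg a
      gcongr
    · simp only [hb_zero]
      exact i0

theorem russo {n : ℕ} (p : ℝ) (A : Pattern n → Prop) (hA : Mono A) :
    ∃ d, HasDerivAt (fun p => Ex p (ind A)) d p ∧ p * d = Ex p (fun x => (hb A x : ℝ)) := by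
  induction n with
  | zero =>
    refine ⟨0, ?_, ?_⟩
    · have : (fun p => Ex p (ind A)) = fun _ => ind A 0 := by
        funext p; rw [Ex_nil]
      rw [this]; exact hasDerivAt_const _ _
    · have : ∀ x, hb A x = 0 := by intro x; simp [hb]
      simp [this, Ex]
  | succ n ih =>
    obtain ⟨d1, hd1, e1⟩ := ih (sct 1 A) (mono_sct hA 1)
    obtain ⟨d0, hd0, e0⟩ := ih (sct 0 A) (mono_sct hA 0)
    refine ⟨Ex p (ind (sct 1 A)) + p * d1 + (-Ex p (ind (sct 0 A)) + (1 - p) * d0), ?_, ?_⟩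
    · have : (fun p => Ex p (ind A)) =
          fun p => p * Ex p (ind (sct 1 A)) + (1 - p) * Ex p (ind (sct 0 A)) := by
        funext p; rw [Ex_succ, ind_succ, ind_succ]
      rw [this]
      refine (((hasDerivAt_id p).mul hd1).add
        (((hasDerivAt_id p).const_sub 1).mul hd0)).congr_deriv ?_
      simp
    · rw [Ex_succ]
      simp only [hb_zero, hb_one hA]
      rw [Ex_add, Ex_sub, ← e1, ← e0]
      ring

lemma code_mono {N : ℕ} (C : Submodule (ZMod 2) (Pattern N)) :
    Mono (fun ω : Pattern N => ∃ x ∈ C, x ≠ 0 ∧ covers ω x) := by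
  rintro ω i ⟨x, hx, hx0, hc⟩
  refine ⟨x, hx, hx0, fun j hj => ?_⟩
  have := hc j hj
  by_cases hji : j = i
  · subst hji; simp at this
  · rwa [Function.update_of_ne hji] at this

lemma code_hb {N dmin : ℕ} (C : Submodule (ZMod 2) (Pattern N))
    (hdmin : IsLeast {w : ℕ | ∃ x ∈ C, x ≠ 0 ∧ wH x = w} dmin) (ω : Pattern N) :
    hb (fun ω : Pattern N => ∃ x ∈ C, x ≠ 0 ∧ covers ω x) ω = 0 ∨
    dmin ≤ hb (fun ω : Pattern N => ∃ x ∈ C, x ≠ 0 ∧ covers ω x) ω := by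
  by_cases h : hb (fun ω : Pattern N => ∃ x ∈ C, x ≠ 0 ∧ covers ω x) ω = 0
  · exact Or.inl h
  right
  by_cases hA : ∃ x ∈ C, x ≠ 0 ∧ covers ω x
  swap
  · exact absurd (if_neg hA) h
  unfold hb at h ⊢
  rw [if_pos hA] at h ⊢
  obtain ⟨i, hi⟩ := Finset.card_ne_zero.1 h
  simp only [mem_filter, mem_univ, true_and] at hi
  -- any covered nonzero codeword is nonzero at a pivotal coordinate
  have hpiv : ∀ x ∈ C, x ≠ 0 → covers ω x → x i ≠ 0 := by
    intro x hx hx0 hc hxi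
    refine hi ⟨x, hx, hx0, fun j hj => ?_⟩
    have hji : j ≠ i := by rintro rfl; exact hj hxi
    rw [Function.update_of_ne hji]; exact hc j hj
  obtain ⟨x, hx, hx0, hc⟩ := hA
  have huniq : ∀ y ∈ C, y ≠ 0 → covers ω y → y = x := by
    intro y hy hy0 hcy
    by_contra hne
    have h1 := hpiv x hx hx0 hc
    have h2 := hpiv y hy hy0 hcy
    refine hpiv (y - x) (C.sub_mem hy hx) (sub_ne_zero.2 hne) ?_ ?_
    · intro j hj
      by_cases hxj : x j = 0
      · by_cases hyj : y j = 0
        · simp [hxj, hyj] at hj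
        · exact hcy j hyj
      · exact hc j hxj
    · have hz : ∀ a b : ZMod 2, a ≠ 0 → b ≠ 0 → a - b = 0 := by decide
      exact hz _ _ h2 h1
  refine (hdmin.2 ⟨x, hx, hx0, rfl⟩).trans ?_
  unfold wH hammingNorm
  refine Finset.card_le_card fun j hj => ?_
  simp only [mem_filter, mem_univ, true_and] at hj ⊢
  rintro ⟨y, hy, hy0, hcy⟩
  have hcy' : covers ω y := by
    intro k hk
    have := hcy k hk
    by_cases hkj : k = j
    · subst hkj; simp at this
    · rwa [Function.update_of_ne hkj] at this
  have := huniq y hy hy0 hcy'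
  subst this
  have := hcy j hj
  simp at this

lemma Pmap_eq {N : ℕ} (C : Submodule (ZMod 2) (Pattern N)) (p : ℝ) :
    Pmap C p = Ex p (ind (fun ω : Pattern N => ∃ x ∈ C, x ≠ 0 ∧ covers ω x)) := by
  unfold Pmap muE errBEC Ex ind wt
  rw [sum_filter]
  refine sum_congr rfl fun x _ => ?_
  split_ifs <;> simp

/-- Strict positivity persists. -/
lemma Ex_ind_pos {n : ℕ} {p q : ℝ} (h0 : 0 < p) (h1 : p < 1) (A : Pattern n → Prop)
    (hq : Ex q (ind A) ≠ 0) : 0 < Ex p (ind A) := by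
  obtain ⟨x, -, hx⟩ := Finset.exists_ne_zero_of_sum_ne_zero hq
  have hAx : A x := by
    by_contra hA
    simp [ind, hA] at hx
  refine sum_pos' (fun y _ => mul_nonneg (wt_pos h0 h1 y).le
    (by unfold ind; split_ifs <;> norm_num)) ⟨x, mem_univ _, ?_⟩
  simp [ind, hAx, wt_pos h0 h1 x]

lemma Ex_ind_not {n : ℕ} (p : ℝ) (A : Pattern n → Prop) :
    Ex p (ind (fun x => ¬ A x)) = 1 - Ex p (ind A) := by
  rw [← Ex_one (n := n) p, ← Ex_sub]
  congr 1
  funext x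
  unfold ind
  by_cases h : A x <;> simp [h]

theorem main_mono {N dmin : ℕ} (C : Submodule (ZMod 2) (Pattern N))
    (hdmin : IsLeast {w : ℕ | ∃ x ∈ C, x ≠ 0 ∧ wH x = w} dmin)
    (hP : ∀ p, 0 < p → p < 1 → 0 < Pmap C p ∧ Pmap C p < 1) :
    MonotoneOn (fun p => gQ (Pmap C p) + Real.sqrt (2 * dmin) * Real.sqrt (-Real.log p))
      (Set.Ioo 0 1) := by
  set A := (fun ω : Pattern N => ∃ x ∈ C, x ≠ 0 ∧ covers ω x) with hAdef
  have hPA : Pmap C = fun p => Ex p (ind A) := funext fun p => Pmap_eq C p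
  have key : ∀ p, 0 < p → p < 1 → ∃ d, 0 ≤ d ∧ HasDerivAt
      (fun p => gQ (Pmap C p) + Real.sqrt (2 * dmin) * Real.sqrt (-Real.log p)) d p := by
    intro p h0 h1
    obtain ⟨d, hd, hde⟩ := russo p A (code_mono C)
    have hl : 0 < -Real.log p := by linarith [Real.log_neg h0 h1]
    obtain ⟨P0, P1⟩ := hP p h0 h1
    rw [← hPA] at hd
    have hQ := (gQ_hasDerivAt P0 P1).comp p hd
    have hS := ((Real.hasDerivAt_log h0.ne').neg.sqrt hl.ne').const_mul (Real.sqrt (2 * dmin))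
    refine ⟨_, ?_, hQ.add hS⟩
    have iso := isoperim h0 h1 A (code_mono C)
    rw [← congrFun hPA p, gI_of P0 P1] at iso
    have hphi := gphi_pos (gQ (Pmap C p))
    set g := gphi (gQ (Pmap C p))
    set L := Real.sqrt (-Real.log p) with hL
    have hLpos : 0 < L := Real.sqrt_pos.2 hl
    -- compare
    have hcmp : Real.sqrt (2 * dmin) * Ex p (fun x => Real.sqrt ((-2 * Real.log p) * hb A x)) ≤
        2 * L * (p * d) := by
      rw [hde, ← Ex_mul, ← Ex_mul]
      refine Ex_mono h0 h1 fun x => ?_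
      rw [show (-2 * Real.log p) * (hb A x : ℝ) = (-Real.log p) * (2 * hb A x) by ring,
        Real.sqrt_mul hl.le, ← hL]
      rcases code_hb C hdmin x with h | h
      · rw [← hAdef] at h
        simp [h]
      · rw [← hAdef] at h
        have h' : (dmin : ℝ) ≤ hb A x := by exact_mod_cast h
        have s1 : Real.sqrt (2 * dmin) ≤ Real.sqrt (2 * hb A x) :=
          Real.sqrt_le_sqrt (by linarith)
        have s2 : Real.sqrt (2 * hb A x) * Real.sqrt (2 * hb A x) = 2 * hb A x :=
          Real.mul_self_sqrt (by positivity)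
        have s3 := mul_le_mul_of_nonneg_right s1 (Real.sqrt_nonneg (2 * hb A x))
        nlinarith
    have hcmp2 : Real.sqrt (2 * dmin) * g ≤ 2 * L * (p * d) :=
      (mul_le_mul_of_nonneg_left iso (Real.sqrt_nonneg _)).trans hcmp
    have : g⁻¹ * d + Real.sqrt (2 * dmin) * (-p⁻¹ / (2 * L)) =
        (2 * L * (p * d) - Real.sqrt (2 * dmin) * g) / (2 * L * p * g) := by
      field_simp
      ring
    change 0 ≤ g⁻¹ * d + Real.sqrt (2 * dmin) * (-p⁻¹ / (2 * L))
    rw [this]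
    exact div_nonneg (by linarith) (by positivity)
  refine monotoneOn_of_deriv_nonneg (convex_Ioo 0 1) ?_ ?_ ?_
  · intro p hp
    obtain ⟨d, -, hd⟩ := key p hp.1 hp.2
    exact hd.continuousAt.continuousWithinAt
  · intro p hp
    rw [interior_Ioo] at hp
    obtain ⟨d, -, hd⟩ := key p hp.1 hp.2
    exact hd.differentiableAt.differentiableWithinAt
  · intro p hp
    rw [interior_Ioo] at hp
    obtain ⟨d, h, hd⟩ := key p hp.1 hp.2
    rw [hd.deriv]; exact h

theorem tillich_zemor_BEC (N dmin : ℕ) (C : Submodule (ZMod 2) (Pattern N))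
    (hdmin : IsLeast {w : ℕ | ∃ x ∈ C, x ≠ 0 ∧ wH x = w} dmin)
    (εstar : ℝ) (hεstar : εstar ∈ Set.Ioo (0 : ℝ) 1)
    (hhalf : Pmap C εstar = 1 / 2) :
    (∀ ε : ℝ, 0 < ε → ε < εstar →
      Pmap C ε ≤
        Phi (Real.sqrt (2 * dmin) * (Real.sqrt (-Real.log εstar) - Real.sqrt (-Real.log ε)))) ∧
    (∀ ε : ℝ, εstar < ε → ε < 1 →
      Pmap C ε ≥
        Phi (Real.sqrt (2 * dmin) * (Real.sqrt (-Real.log εstar) - Real.sqrt (-Real.log ε)))) := by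
  have hP : ∀ p, 0 < p → p < 1 → 0 < Pmap C p ∧ Pmap C p < 1 := by
    intro p h0 h1
    rw [Pmap_eq] at hhalf ⊢
    refine ⟨Ex_ind_pos h0 h1 _ (q := εstar) (by rw [hhalf]; norm_num), ?_⟩
    have := Ex_ind_pos h0 h1 (fun ω : Pattern N => ¬ ∃ x ∈ C, x ≠ 0 ∧ covers ω x) (q := εstar)
      (by rw [Ex_ind_not, hhalf]; norm_num)
    rw [Ex_ind_not] at this
    linarith
  have hm := main_mono C hdmin hP
  have hs : gQ (Pmap C εstar) = 0 := by
    rw [hhalf, ← Phi_zero, gQ_Phi]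
  constructor
  · intro ε h0 h1
    have hε1 := h1.trans hεstar.2
    have h := hm ⟨h0, hε1⟩ hεstar h1.le
    simp only [hs] at h
    have hle := Phi_strictMono.monotone (show gQ (Pmap C ε) ≤ Real.sqrt (2 * dmin) *
      (Real.sqrt (-Real.log εstar) - Real.sqrt (-Real.log ε)) by linarith)
    rwa [Phi_gQ (hP ε h0 hε1).1 (hP ε h0 hε1).2] at hle
  · intro ε h1 h2
    have h0 := hεstar.1.trans h1
    have h := hm hεstar ⟨h0, h2⟩ h1.le
    simp only [hs] at h
    have hle := Phi_strictMono.monotone (show Real.sqrt (2 * dmin) *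
      (Real.sqrt (-Real.log εstar) - Real.sqrt (-Real.log ε)) ≤ gQ (Pmap C ε) by linarith)
    rwa [Phi_gQ (hP ε h0 h2).1 (hP ε h0 h2).2] at hle

end
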